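/- arXiv:1606.06935 — 2 statements merged into one kernel-verified Lean document; each statement's English description precedes it below -/
import Mathlib

section
/- The sequence (M(n))_{n ≥ 0} of maximal sums of consecutive terms of the Rudin-Shapiro sequence is 2-regular, i.e., the ℤ-submodule of the module of all integer sequences generated by the 2-kernel {(M(2^e n + c))_{n≥0} : e ≥ 0, 0 ≤ c < 2^e} is finitely generated. -/
/-- The partial sum `Σ_w(i, n) = w(i) + w(i+1) + ⋯ + w(i+n−1)`. -/
def pSum (w : ℕ → ℤ) (i n : ℕ) : ℤ := ∑ j ∈ Finset.range n, w (i + j)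

/-- The 2-kernel of an integer sequence `f`: the set of subsequences
`(f(2^e n + c))_{n ≥ 0}` with `e ≥ 0` and `0 ≤ c < 2^e`. -/
def kernel2 (f : ℕ → ℤ) : Set (ℕ → ℤ) :=
  {g | ∃ e c : ℕ, c < 2 ^ e ∧ g = fun n => f (2 ^ e * n + c)}

/-! Split a window `[i, i + l)` of a sequence `w` at the multiples of `k`. If every block
`[k a, k a + k)` has sum `c * w a`, the sum over the window is `c` times the sum over a parent
window of length about `l / k`, up to boundary terms. If moreover `w` is a function of the state of
a finite base-`k` automaton, the boundary terms are a function of the states at the two ends of the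
parent. They are bounded, so for `2 ≤ c` a window within a suitable constant `K` of the maximum has
a parent within the same `K` of the maximum. Hence the finite set of possible end states and
deficits of the near-optimal windows of length `n` and `n + 1` determines the same set for
`k n + d`, as well as `M (k n + d) - c M n`: the maximum `M` is `c`-linear in base `k` up to a
function of a finite automaton. For the Rudin-Shapiro sequence `k = 4`, `c = 2`, and the state of
`n` is the pair `(r n, (-1) ^ n r n) = (r (2 n), r (2 n + 1))`. -/

open Function

section Regularity

theorem decimate_pow_mem {X : Type*} {k : ℕ} {S : Set (ℕ → X)}
    (hS : ∀ g ∈ S, ∀ d < k, (fun n => g (k * n + d)) ∈ S) {f : ℕ → X} (hf : f ∈ S) (e : ℕ) :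
    ∀ c < k ^ e, (fun n => f (k ^ e * n + c)) ∈ S := by
  induction e with
  | zero =>
    intro c hc
    obtain rfl : c = 0 := by simpa using hc
    simpa using hf
  | succ e ih =>
    intro c hc
    have hpos : 0 < k ^ e := Nat.pos_of_ne_zero fun h => by simp [pow_succ, h] at hc
    have hmem := hS _ (ih (c % k ^ e) (Nat.mod_lt _ hpos)) (c / k ^ e)
      (Nat.div_lt_of_lt_mul (by rwa [← pow_succ]))
    convert hmem using 3 with n
    rw [mul_add, add_assoc, Nat.div_add_mod, pow_succ, mul_assoc]

theorem fg_span_kernel2_of_mem {b : ℕ} (hb : b ≠ 0) {S : Submodule ℤ (ℕ → ℤ)} (hfg : S.FG)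
    (hS : ∀ g ∈ S, ∀ d < 2 ^ b, (fun n => g (2 ^ b * n + d)) ∈ S) {f : ℕ → ℤ} (hf : f ∈ S) :
    (Submodule.span ℤ (kernel2 f)).FG := by
  let decimate (p : Fin b × Fin (2 ^ b)) : (ℕ → ℤ) →ₗ[ℤ] (ℕ → ℤ) :=
    LinearMap.funLeft ℤ ℤ fun n => 2 ^ (p.1 : ℕ) * n + p.2
  have hfg' : (⨆ p, S.map (decimate p)).FG := Submodule.fg_iSup _ fun p => hfg.map _
  refine hfg'.of_le (Submodule.span_le.2 ?_)
  rintro _ ⟨e, c, hc, rfl⟩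
  have he : 2 ^ e = (2 ^ b) ^ (e / b) * 2 ^ (e % b) := by
    rw [← pow_mul, ← pow_add, Nat.div_add_mod]
  have hlt : e % b < b := Nat.mod_lt _ (Nat.pos_of_ne_zero hb)
  have hquot : c / (2 ^ b) ^ (e / b) < 2 ^ (e % b) := Nat.div_lt_of_lt_mul (he ▸ hc)
  have hmem := decimate_pow_mem (S := (S : Set (ℕ → ℤ))) hS hf (e / b) (c % (2 ^ b) ^ (e / b))
    (Nat.mod_lt _ (by positivity))
  refine Submodule.mem_iSup_of_mem
    (⟨e % b, hlt⟩, ⟨_, hquot.trans (Nat.pow_lt_pow_right one_lt_two hlt)⟩) ⟨_, hmem, ?_⟩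
  funext n
  simp only [decimate, LinearMap.funLeft_apply]
  rw [mul_add, add_assoc, Nat.div_add_mod, he, mul_assoc]

/-- The functions that depend on their argument only through `q`. -/
def factorsThroughSubmodule (R : Type*) [Semiring R] {α X : Type*} (q : α → X) :
    Submodule R (α → R) where
  carrier := {g | g.FactorsThrough q}
  add_mem' hg hh _ _ e := congrArg₂ (· + ·) (hg e) (hh e)
  zero_mem' _ _ _ := rfl
  smul_mem' a _ hg _ _ e := congrArg (a * ·) (hg e)

theorem fg_factorsThroughSubmodule (R : Type*) [Ring R] [IsNoetherianRing R] {α X : Type*}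
    {q : α → X} (hq : (Set.range q).Finite) : (factorsThroughSubmodule R q).FG := by
  have := hq.to_subtype
  have hrange : (LinearMap.range (LinearMap.funLeft R R (Set.rangeFactorization q))).FG :=
    Module.Finite.iff_fg.1 inferInstance
  refine hrange.of_le fun g hg => ?_
  have hg' : g.FactorsThrough (Set.rangeFactorization q) :=
    fun _ _ e => hg (congrArg Subtype.val e)
  obtain ⟨h, rfl⟩ := (factorsThrough_iff g).1 hg'
  exact ⟨h, rfl⟩

/-- `τ n` is the state that a finite automaton reaches on reading the base-`k` digits of `n`, most
significant digit first. The transition function is left implicit: we only ask that `τ (k n + d)`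
be determined by `τ n` and `d`. -/
structure IsAutomatonState {T : Type*} (k : ℕ) (τ : ℕ → T) : Prop where
  finite_range : (Set.range τ).Finite
  factorsThrough : ∀ d < k, (fun n => τ (k * n + d)).FactorsThrough τ

theorem IsAutomatonState.fg_span_kernel2 {T : Type*} {b : ℕ} (hb : b ≠ 0) {τ : ℕ → T}
    (hτ : IsAutomatonState (2 ^ b) τ) {f : ℕ → ℤ} {c : ℤ}
    (hf : ∀ d < 2 ^ b, (fun n => f (2 ^ b * n + d) - c * f n).FactorsThrough τ) :
    (Submodule.span ℤ (kernel2 f)).FG := by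
  have hfg : (Submodule.span ℤ {f} ⊔ factorsThroughSubmodule ℤ τ).FG :=
    (Submodule.fg_span_singleton f).sup (fg_factorsThroughSubmodule ℤ hτ.finite_range)
  have hmem : f ∈ Submodule.span ℤ {f} := Submodule.mem_span_singleton_self f
  refine fg_span_kernel2_of_mem hb hfg (fun g hg d hd => ?_) (Submodule.mem_sup_left hmem)
  obtain ⟨_, hx, h, hh, rfl⟩ := Submodule.mem_sup.1 hg
  obtain ⟨a, rfl⟩ := Submodule.mem_span_singleton.1 hx
  have hincr : (fun n => f (2 ^ b * n + d) - c * f n) ∈ factorsThroughSubmodule ℤ τ := hf d hd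
  have hcomp : (fun n => h (2 ^ b * n + d)) ∈ factorsThroughSubmodule ℤ τ :=
    fun _ _ e => hh (hτ.factorsThrough d hd e)
  refine Submodule.mem_sup.2 ⟨(a * c) • f, Submodule.smul_mem _ _ hmem, _,
    add_mem (Submodule.smul_mem _ a hincr) hcomp, ?_⟩
  funext n
  simp only [Pi.add_apply, Pi.smul_apply, smul_eq_mul]
  ring

end Regularity

section BlockSums

variable {w : ℕ → ℤ} {k : ℕ} {c B : ℤ}

theorem pSum_add (w : ℕ → ℤ) (i m n : ℕ) : pSum w i (m + n) = pSum w i m + pSum w (i + m) n := by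
  simp only [pSum, Finset.sum_range_add, add_assoc]

theorem pSum_succ (w : ℕ → ℤ) (i n : ℕ) : pSum w i (n + 1) = pSum w i n + w (i + n) :=
  Finset.sum_range_succ _ _

theorem abs_pSum_le (hB : ∀ n, |w n| ≤ B) (i n : ℕ) : |pSum w i n| ≤ n * B :=
  (Finset.abs_sum_le_sum_abs _ _).trans <|
    (Finset.sum_le_card_nsmul _ _ B fun _ _ => hB _).trans_eq (by simp)

theorem abs_pSum_le_of_le (hB : ∀ n, |w n| ≤ B) (i : ℕ) {n N : ℕ} (h : n ≤ N) :
    |pSum w i n| ≤ N * B := by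
  have hB0 : 0 ≤ B := (abs_nonneg _).trans (hB 0)
  exact (abs_pSum_le hB i n).trans (by gcongr)

theorem pSum_mul_mul (hblock : ∀ a, pSum w (k * a) k = c * w a) (a m : ℕ) :
    pSum w (k * a) (k * m) = c * pSum w a m := by
  induction m with
  | zero => simp [pSum]
  | succ m ih => rw [mul_add_one, pSum_add, ih, ← mul_add, hblock, pSum_succ, mul_add]

theorem pSum_mul_add (hblock : ∀ a, pSum w (k * a) k = c * w a) (a : ℕ) {s t l m : ℕ}
    (h : s + l = k * m + t) :
    pSum w (k * a + s) l = c * pSum w a m - pSum w (k * a) s + pSum w (k * (a + m)) t := by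
  have hsplit := pSum_add w (k * a) s l
  rw [h, pSum_add, pSum_mul_mul hblock, ← mul_add] at hsplit
  linarith

theorem IsAutomatonState.factorsThrough_pSum {T : Type*} {τ : ℕ → T} (hτ : IsAutomatonState k τ)
    (hw : w.FactorsThrough τ) {s : ℕ} (hs : s ≤ k) :
    (fun a => pSum w (k * a) s).FactorsThrough τ := fun _ _ e =>
  Finset.sum_congr rfl fun j hj =>
    hw (hτ.factorsThrough j ((Finset.mem_range.1 hj).trans_le hs) e)

end BlockSums

section Windows

variable {T : Type*} {k : ℕ} {c B K : ℤ} {τ : ℕ → T} {w M : ℕ → ℤ}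

theorem mul_sub_le_max_mul_add (hblock : ∀ a, pSum w (k * a) k = c * w a) (hB : ∀ n, |w n| ≤ B)
    (hM : ∀ n, IsGreatest (Set.range fun i => pSum w i n) (M n)) (n : ℕ) {d : ℕ} (hd : d ≤ k) :
    c * M n - k * B ≤ M (k * n + d) := by
  obtain ⟨a, ha : pSum w a n = M n⟩ := (hM n).1
  calc c * M n - k * B ≤ c * M n + pSum w (k * a + k * n) d := by
        linarith [(abs_le.1 (abs_pSum_le_of_le hB (k * a + k * n) hd)).1]
    _ = pSum w (k * a) (k * n + d) := by rw [pSum_add, pSum_mul_mul hblock, ha]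
    _ ≤ M (k * n + d) := (hM _).2 ⟨_, rfl⟩

theorem deficit_le_of_deficit_mul_add_le (hc : 2 ≤ c)
    (hblock : ∀ a, pSum w (k * a) k = c * w a) (hB : ∀ n, |w n| ≤ B)
    (hM : ∀ n, IsGreatest (Set.range fun i => pSum w i n) (M n)) (hK : 3 * (k * B) ≤ K)
    {a s t d l m n : ℕ} (hs : s ≤ k) (ht : t ≤ k) (hd : d ≤ k) (h : s + l = k * m + t)
    (hdef : M (k * n + d) - pSum w (k * a + s) l ≤ K) : M n - pSum w a m ≤ K := by
  have hB0 : 0 ≤ k * B := mul_nonneg k.cast_nonneg ((abs_nonneg _).trans (hB 0))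
  have hs' := (abs_le.1 (abs_pSum_le_of_le hB (k * a) hs)).1
  have ht' := (abs_le.1 (abs_pSum_le_of_le hB (k * (a + m)) ht)).2
  have hdouble : c * (M n - pSum w a m) ≤ 2 * K := by
    linarith [pSum_mul_add hblock a h, mul_sub_le_max_mul_add hblock hB hM n hd]
  by_contra! hlt
  nlinarith

/-- The state at `n` of the automaton computing `M`: for every window of length `n + ε` with
`ε ≤ 1` whose sum falls short of `M n` by at most `K`, it records `ε`, the deficit, and the states
at both ends of the window. Both lengths are needed: for `d < k`, the parent of a window of length
`k * n + d` or `k * n + d + 1` has length `n` or `n + 1`. -/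
def windowState (τ : ℕ → T) (w M : ℕ → ℤ) (K : ℤ) (n : ℕ) : Set (ℕ × ℤ × T × T) :=
  {x | ∃ ε i, ε ≤ 1 ∧ M n - pSum w i (n + ε) ≤ K ∧
    x = (ε, M n - pSum w i (n + ε), τ i, τ (i + (n + ε)))}

theorem finite_range_windowState (hτ : (Set.range τ).Finite) (hB : ∀ n, |w n| ≤ B)
    (hM : ∀ n, IsGreatest (Set.range fun i => pSum w i n) (M n)) (K : ℤ) :
    (Set.range (windowState τ w M K)).Finite := by
  have hbox : (Set.Iic 1 ×ˢ Set.Icc (-B) K ×ˢ Set.range τ ×ˢ Set.range τ).Finite :=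
    (Set.finite_Iic 1).prod ((Set.finite_Icc _ _).prod (hτ.prod hτ))
  refine hbox.finite_subsets.subset ?_
  rintro _ ⟨n, rfl⟩ _ ⟨ε, i, hε, hdef, rfl⟩
  have hmax : pSum w i n ≤ M n := (hM n).2 ⟨i, rfl⟩
  have hrest := (abs_le.1 (abs_pSum_le_of_le hB (i + n) hε)).2
  refine ⟨hε, ⟨?_, hdef⟩, ⟨_, rfl⟩, ⟨_, rfl⟩⟩
  rw [pSum_add]
  push_cast at hrest
  linarith

theorem exists_window_of_windowState_eq (hc : 2 ≤ c) (hτ : IsAutomatonState k τ)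
    (hw : w.FactorsThrough τ) (hblock : ∀ a, pSum w (k * a) k = c * w a) (hB : ∀ n, |w n| ≤ B)
    (hM : ∀ n, IsGreatest (Set.range fun i => pSum w i n) (M n)) (hK : 3 * (k * B) ≤ K)
    {d m m' ε i : ℕ} (hd : d < k) (hstate : windowState τ w M K m = windowState τ w M K m')
    (hε : ε ≤ 1) (hdef : M (k * m + d) - pSum w i (k * m + d + ε) ≤ K) :
    ∃ i', pSum w i' (k * m' + d + ε) - c * M m' = pSum w i (k * m + d + ε) - c * M m ∧
      τ i' = τ i ∧ τ (i' + (k * m' + d + ε)) = τ (i + (k * m + d + ε)) := by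
  have hk : 0 < k := d.zero_le.trans_lt hd
  obtain ⟨a, s, hs, rfl⟩ : ∃ a s, s < k ∧ i = k * a + s :=
    ⟨i / k, i % k, Nat.mod_lt _ hk, (Nat.div_add_mod i k).symm⟩
  obtain ⟨η, t, ht, hηt⟩ : ∃ η t, t < k ∧ s + (d + ε) = k * η + t :=
    ⟨_, _, Nat.mod_lt _ hk, (Nat.div_add_mod _ k).symm⟩
  have hη : η ≤ 1 := by
    by_contra! hlt
    have : k * 2 ≤ k * η := Nat.mul_le_mul_left k hlt
    omega
  have hlen : ∀ n, s + (k * n + d + ε) = k * (n + η) + t := fun n => by rw [mul_add]; omega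
  have hend : ∀ a n, k * a + s + (k * n + d + ε) = k * (a + (n + η)) + t := fun a n => by
    rw [add_assoc, hlen, ← add_assoc, ← mul_add]
  have hparent : (η, M m - pSum w a (m + η), τ a, τ (a + (m + η))) ∈ windowState τ w M K m :=
    ⟨η, a, hη, deficit_le_of_deficit_mul_add_le hc hblock hB hM hK hs.le ht.le hd.le (hlen m) hdef,
      rfl⟩
  rw [hstate] at hparent
  obtain ⟨_, a', -, -, heq⟩ := hparent
  obtain ⟨rfl, hdeficit, hleft, hright⟩ := by simpa only [Prod.mk.injEq] using heq
  refine ⟨k * a' + s, ?_, (hτ.factorsThrough s hs hleft).symm, ?_⟩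
  · have hs' : pSum w (k * a) s = pSum w (k * a') s := hτ.factorsThrough_pSum hw hs.le hleft
    have ht' : pSum w (k * (a + (m + η))) t = pSum w (k * (a' + (m' + η))) t :=
      hτ.factorsThrough_pSum hw ht.le hright
    rw [pSum_mul_add hblock _ (hlen m), pSum_mul_add hblock _ (hlen m'), hs', ht']
    linear_combination c * hdeficit
  · rw [hend, hend]
    exact (hτ.factorsThrough t ht hright).symm

theorem factorsThrough_max_mul_add_sub (hc : 2 ≤ c) (hτ : IsAutomatonState k τ)
    (hw : w.FactorsThrough τ) (hblock : ∀ a, pSum w (k * a) k = c * w a) (hB : ∀ n, |w n| ≤ B)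
    (hM : ∀ n, IsGreatest (Set.range fun i => pSum w i n) (M n)) (hK : 3 * (k * B) ≤ K)
    {d : ℕ} (hd : d < k) :
    (fun n => M (k * n + d) - c * M n).FactorsThrough (windowState τ w M K) := by
  have hK0 : 0 ≤ K := by
    have : 0 ≤ k * B := mul_nonneg k.cast_nonneg ((abs_nonneg _).trans (hB 0))
    linarith
  have hle : ∀ {m m'}, windowState τ w M K m = windowState τ w M K m' →
      M (k * m + d) - c * M m ≤ M (k * m' + d) - c * M m' := by
    intro m m' hstate
    obtain ⟨i, hi : pSum w i (k * m + d) = M (k * m + d)⟩ := (hM (k * m + d)).1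
    obtain ⟨i', hsum, -⟩ := exists_window_of_windowState_eq hc hτ hw hblock hB hM hK hd hstate
      zero_le_one (i := i) (by simpa [hi] using hK0)
    have hmax : pSum w i' (k * m' + d) ≤ M (k * m' + d) := (hM _).2 ⟨i', rfl⟩
    rw [add_zero, add_zero, hi] at hsum
    linarith
  exact fun _ _ hstate => (hle hstate).antisymm (hle hstate.symm)

theorem isAutomatonState_windowState (hc : 2 ≤ c) (hτ : IsAutomatonState k τ)
    (hw : w.FactorsThrough τ) (hblock : ∀ a, pSum w (k * a) k = c * w a) (hB : ∀ n, |w n| ≤ B)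
    (hM : ∀ n, IsGreatest (Set.range fun i => pSum w i n) (M n)) (hK : 3 * (k * B) ≤ K) :
    IsAutomatonState k (windowState τ w M K) where
  finite_range := finite_range_windowState hτ.finite_range hB hM K
  factorsThrough d hd := by
    have hsub : ∀ {m m'}, windowState τ w M K m = windowState τ w M K m' →
        windowState τ w M K (k * m + d) ⊆ windowState τ w M K (k * m' + d) := by
      rintro m m' hstate _ ⟨ε, i, hε, hdef, rfl⟩
      obtain ⟨i', hsum, hleft, hright⟩ :=
        exists_window_of_windowState_eq hc hτ hw hblock hB hM hK hd hstate hε hdef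
      have hincr : M (k * m + d) - c * M m = M (k * m' + d) - c * M m' :=
        factorsThrough_max_mul_add_sub hc hτ hw hblock hB hM hK hd hstate
      have hdeficit : M (k * m' + d) - pSum w i' (k * m' + d + ε) =
          M (k * m + d) - pSum w i (k * m + d + ε) := by linarith
      exact ⟨ε, i', hε, hdeficit.trans_le hdef, by rw [hdeficit, hleft, hright]⟩
    exact fun _ _ hstate => (hsub hstate).antisymm (hsub hstate.symm)

theorem exists_abs_le_of_factorsThrough (hτ : (Set.range τ).Finite) (hw : w.FactorsThrough τ) :
    ∃ B, ∀ n, |w n| ≤ B := by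
  obtain ⟨g, rfl⟩ := (factorsThrough_iff w).1 hw
  have hfin : (Set.range ((|g ·|) ∘ τ)).Finite := Set.range_comp (|g ·|) τ ▸ hτ.image _
  obtain ⟨B, hB⟩ := hfin.bddAbove
  exact ⟨B, fun n => hB ⟨n, rfl⟩⟩

theorem max_sum_two_regular_general {b : ℕ} (hb : b ≠ 0) (hc : 2 ≤ c)
    (hτ : IsAutomatonState (2 ^ b) τ) (hw : w.FactorsThrough τ)
    (hblock : ∀ a, pSum w (2 ^ b * a) (2 ^ b) = c * w a)
    (hM : ∀ n, IsGreatest (Set.range fun i => pSum w i n) (M n)) :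
    (Submodule.span ℤ (kernel2 M)).FG := by
  obtain ⟨B, hB⟩ := exists_abs_le_of_factorsThrough hτ.finite_range hw
  exact (isAutomatonState_windowState hc hτ hw hblock hB hM le_rfl).fg_span_kernel2 hb
    fun _ hd => factorsThrough_max_mul_add_sub hc hτ hw hblock hB hM le_rfl hd

end Windows

section RudinShapiro

variable {r : ℕ → ℤ}

/-- The pair `(r n, (-1) ^ n * r n)`, from which a recursion of Rudin-Shapiro type determines
`r` on the base-`4` children `4 * n + d` of `n`. -/
def rudinShapiroState (r : ℕ → ℤ) (n : ℕ) : ℤ × ℤ := (r n, (-1) ^ n * r n)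

theorem abs_rudinShapiro (hre : ∀ n, r (2 * n) = r n)
    (hro : ∀ n, r (2 * n + 1) = (-1) ^ n * r n) (n : ℕ) : |r n| = |r 0| := by
  induction n using Nat.evenOddRec with
  | h0 => rfl
  | h_even n ih => rw [hre, ih]
  | h_odd n ih => simp [hro, abs_mul, ih]

theorem rudinShapiro_four_mul (hre : ∀ n, r (2 * n) = r n)
    (hro : ∀ n, r (2 * n + 1) = (-1) ^ n * r n) (n : ℕ) :
    r (4 * n) = r n ∧ r (4 * n + 1) = r n ∧ r (4 * n + 2) = (-1) ^ n * r n ∧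
      r (4 * n + 3) = -((-1) ^ n * r n) := by
  refine ⟨?_, ?_, ?_, ?_⟩
  · rw [show 4 * n = 2 * (2 * n) by ring, hre, hre]
  · rw [show 4 * n + 1 = 2 * (2 * n) + 1 by ring, hro, hre]; simp
  · rw [show 4 * n + 2 = 2 * (2 * n + 1) by ring, hre, hro]
  · rw [show 4 * n + 3 = 2 * (2 * n + 1) + 1 by ring, hro, hro]; simp [pow_succ]

theorem isAutomatonState_rudinShapiroState (hre : ∀ n, r (2 * n) = r n)
    (hro : ∀ n, r (2 * n + 1) = (-1) ^ n * r n) : IsAutomatonState 4 (rudinShapiroState r) where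
  finite_range := by
    refine ((Set.finite_Icc (-|r 0|) |r 0|).prod (Set.finite_Icc (-|r 0|) |r 0|)).subset ?_
    rintro _ ⟨n, rfl⟩
    have habs := abs_rudinShapiro hre hro n
    exact ⟨abs_le.1 habs.le, abs_le.1 (by simp [rudinShapiroState, abs_mul, habs])⟩
  factorsThrough d hd m n hmn := by
    obtain ⟨hm0, hm1, hm2, hm3⟩ := rudinShapiro_four_mul hre hro m
    obtain ⟨hn0, hn1, hn2, hn3⟩ := rudinShapiro_four_mul hre hro n
    obtain ⟨hr, hsign⟩ := by simpa only [rudinShapiroState, Prod.mk.injEq] using hmn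
    have hpow : ∀ n, (-1 : ℤ) ^ (4 * n) = 1 := fun n => Even.neg_one_pow (by simp [parity_simps])
    interval_cases d <;>
      simp only [rudinShapiroState, pow_add, hpow, add_zero, hm0, hm1, hm2, hm3, hn0, hn1, hn2, hn3,
        hsign] <;>
      simp only [hr]

theorem pSum_rudinShapiro_block (hre : ∀ n, r (2 * n) = r n)
    (hro : ∀ n, r (2 * n + 1) = (-1) ^ n * r n) (n : ℕ) : pSum r (4 * n) 4 = 2 * r n := by
  obtain ⟨h0, h1, h2, h3⟩ := rudinShapiro_four_mul hre hro n
  simp only [pSum, Finset.sum_range_succ, Finset.sum_range_zero, add_zero, h0, h1, h2, h3]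
  ring

end RudinShapiro

/-- The sequence `(M(n))ₙ` of maximal sums of consecutive
terms of the Rudin–Shapiro sequence is 2-regular: the ℤ-submodule of the
module of all integer sequences generated by its 2-kernel is finitely
generated. -/
theorem max_sum_two_regular
    (r : ℕ → ℤ) (hr0 : r 0 = 1)
    (hre : ∀ n, r (2 * n) = r n)
    (hro : ∀ n, r (2 * n + 1) = (-1) ^ n * r n)
    (M : ℕ → ℤ)
    (hM : ∀ n, IsGreatest (Set.range fun i => pSum r i n) (M n)) :
    (Submodule.span ℤ (kernel2 M)).FG :=
  max_sum_two_regular_general two_ne_zero le_rfl (isAutomatonState_rudinShapiroState hre hro)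
    (fun _ _ e => congrArg Prod.fst e) (pSum_rudinShapiro_block hre hro) hM
end

section
/- Let ΔM(n) = M(n+1) − M(n). Then ΔM(i) = 1 for 0 ≤ i ≤ 3, and for every n ≥ 1: ΔM(4n) = −1, ΔM(4n+3) = 1, and ΔM(4n+1) = ΔM(4n+2) = ΔM(n). -/
/-! Put `S k = r 0 + ⋯ + r (k - 1)`. Then `S (4k) = 2 S k`, `S (4k+1) = S k + S (k+1)`,
`S (4k+2) = 2 S (k+1)` and `S (4k+3) = 2 S (k+1) ± 1`. So the sum over a window of length `4n + c`
with `c < 4` is the sum over two windows of length `n` or `n + 1`, up to an error of at most `1` at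
each end. This bounds `M (4n)`, `M (4n+1)`, `M (4n+2)`, `M (4n+3)` by `2 M n + 2`, `2 M n + 1`,
`M n + M (n+1) + 1`, `2 M (n+1) + 1`. For `n ≥ 1` the bounds are attained, because maximal windows
can be chosen for which the errors at the ends have the favourable sign; by induction this property
passes from `n` and `n + 1` to `4n + c`.
-/

/-- The Rudin-Shapiro sequence, given by its defining recurrences. -/
structure IsRudinShapiro (r : ℕ → ℤ) : Prop where
  zero : r 0 = 1
  two_mul : ∀ n, r (2 * n) = r n
  two_mul_add_one : ∀ n, r (2 * n + 1) = (-1) ^ n * r n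

/-- `M n` is the maximal sum of `n` consecutive terms of `w`. -/
def IsMaxWindowSum (w M : ℕ → ℤ) : Prop :=
  ∀ n, IsGreatest (Set.range fun i => pSum w i n) (M n)

/-- The sum `w 0 + ⋯ + w (n - 1)`; the window `[a, b)` has sum `prefixSum w b - prefixSum w a`. -/
def prefixSum (w : ℕ → ℤ) (n : ℕ) : ℤ := ∑ j ∈ Finset.range n, w j

/-- The window `[a, b)` of `w` has length `n` and sum `M n`; when `IsMaxWindowSum w M` holds, it is
a maximal window of length `n`. -/
def IsMaxWindow (w M : ℕ → ℤ) (n a b : ℕ) : Prop :=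
  a + n = b ∧ prefixSum w b - prefixSum w a = M n

theorem prefixSum_succ (w : ℕ → ℤ) (n : ℕ) : prefixSum w (n + 1) = prefixSum w n + w n :=
  Finset.sum_range_succ w n

theorem pSum_eq_prefixSum_sub (w : ℕ → ℤ) (i n : ℕ) :
    pSum w i n = prefixSum w (i + n) - prefixSum w i :=
  (Finset.sum_range_add_sub_sum_range w i n).symm

theorem pSum_eq_mul_of_forall_eq {w : ℕ → ℤ} {a n : ℕ} {c : ℤ}
    (hc : ∀ k ∈ Finset.Ico a (a + n), w k = c) : pSum w a n = n * c := by
  rw [pSum, Finset.sum_congr rfl fun j hj => hc (a + j) (by simpa using hj), Finset.sum_const,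
    Finset.card_range, nsmul_eq_mul]

namespace IsMaxWindowSum

variable {w M : ℕ → ℤ}

theorem prefixSum_sub_le (hM : IsMaxWindowSum w M) (a n : ℕ) :
    prefixSum w (a + n) - prefixSum w a ≤ M n := by
  rw [← pSum_eq_prefixSum_sub]
  exact (hM n).2 ⟨a, rfl⟩

theorem prefixSum_succ_sub_succ_le (hM : IsMaxWindowSum w M) (a n : ℕ) :
    prefixSum w (a + n + 1) - prefixSum w (a + 1) ≤ M n := by
  rw [add_right_comm]
  exact hM.prefixSum_sub_le (a + 1) n

theorem exists_isMaxWindow (hM : IsMaxWindowSum w M) (n : ℕ) : ∃ a b, IsMaxWindow w M n a b := by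
  obtain ⟨a, ha⟩ := (hM n).1
  exact ⟨a, a + n, rfl, (pSum_eq_prefixSum_sub w a n).symm.trans ha⟩

theorem isMaxWindow_of_le (hM : IsMaxWindowSum w M) {n a b : ℕ} (hab : a + n = b)
    (hle : M n ≤ prefixSum w b - prefixSum w a) : IsMaxWindow w M n a b :=
  ⟨hab, (hab ▸ hM.prefixSum_sub_le a n).antisymm hle⟩

theorem zero (hM : IsMaxWindowSum w M) : M 0 = 0 := by
  obtain ⟨a, _, rfl, ha⟩ := hM.exists_isMaxWindow 0
  rw [← ha, add_zero, sub_self]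

theorem succ_le_add (hM : IsMaxWindowSum w M) {c : ℤ} (hw : ∀ k, w k ≤ c) (n : ℕ) :
    M (n + 1) ≤ M n + c := by
  obtain ⟨a, _, rfl, ha⟩ := hM.exists_isMaxWindow (n + 1)
  rw [← add_assoc, prefixSum_succ] at ha
  linarith [hM.prefixSum_sub_le a n, hw (a + n)]

theorem add_le_succ (hM : IsMaxWindowSum w M) {c : ℤ} (hw : ∀ k, c ≤ w k) (n : ℕ) :
    M n + c ≤ M (n + 1) := by
  obtain ⟨a, _, rfl, ha⟩ := hM.exists_isMaxWindow n
  have hle := hM.prefixSum_sub_le a (n + 1)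
  rw [← add_assoc, prefixSum_succ] at hle
  linarith [hw (a + n)]

theorem le_mul (hM : IsMaxWindowSum w M) {c : ℤ} (hw : ∀ k, w k ≤ c) (n : ℕ) : M n ≤ n * c := by
  induction n with
  | zero => simp [hM.zero]
  | succ n ih =>
    rw [Nat.cast_succ, add_one_mul]
    linarith [hM.succ_le_add hw n]

theorem isMaxWindow_of_forall_eq (hM : IsMaxWindowSum w M) {c : ℤ} (hw : ∀ k, w k ≤ c) {a n : ℕ}
    (hc : ∀ k ∈ Finset.Ico a (a + n), w k = c) : IsMaxWindow w M n a (a + n) := by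
  refine hM.isMaxWindow_of_le rfl ?_
  rw [← pSum_eq_prefixSum_sub, pSum_eq_mul_of_forall_eq hc]
  exact hM.le_mul hw n

theorem eq_mul_of_forall_eq (hM : IsMaxWindowSum w M) {c : ℤ} (hw : ∀ k, w k ≤ c) {a n : ℕ}
    (hc : ∀ k ∈ Finset.Ico a (a + n), w k = c) : M n = n * c := by
  rw [← (hM.isMaxWindow_of_forall_eq hw hc).2, ← pSum_eq_prefixSum_sub,
    pSum_eq_mul_of_forall_eq hc]

end IsMaxWindowSum

namespace IsMaxWindow

variable {w M : ℕ → ℤ} {n a b : ℕ} {c : ℤ}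

theorem maxSum_succ_of_right_eq (h : IsMaxWindow w M n a b) (hM : IsMaxWindowSum w M)
    (hw : ∀ k, w k ≤ c) (hb : w b = c) : M (n + 1) = M n + c := by
  obtain ⟨rfl, hsum⟩ := h
  have hle := hM.prefixSum_sub_le a (n + 1)
  rw [← add_assoc, prefixSum_succ, hb] at hle
  linarith [hM.succ_le_add hw n]

theorem maxSum_succ_of_left_eq (h : IsMaxWindow w M (n + 1) a b) (hM : IsMaxWindowSum w M)
    (hw : ∀ k, c ≤ w k) (ha : w a = c) : M (n + 1) = M n + c := by
  obtain ⟨rfl, hsum⟩ := h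
  have hle := hM.prefixSum_succ_sub_succ_le a n
  rw [prefixSum_succ w a, ha] at hle
  rw [← add_assoc] at hsum
  linarith [hM.add_le_succ hw n]

end IsMaxWindow

/-- The error term `r (2k+1)` in `S (4k+3) = 2 S (k+1) + r (2k+1)`, where `S` is the prefix sum of
the Rudin-Shapiro sequence `r`. -/
def defect (r : ℕ → ℤ) (k : ℕ) : ℤ := r (2 * k + 1)

theorem exists_eq_four_mul_add (a : ℕ) :
    ∃ i, a = 4 * i ∨ a = 4 * i + 1 ∨ a = 4 * i + 2 ∨ a = 4 * i + 3 :=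
  ⟨a / 4, by lia⟩

namespace IsRudinShapiro

variable {r : ℕ → ℤ} (hr : IsRudinShapiro r)
include hr

theorem eq_one_or_eq_neg_one (k : ℕ) : r k = 1 ∨ r k = -1 := by
  induction k using Nat.evenOddStrongRec with
  | h_even m ih =>
    rcases m.eq_zero_or_pos with rfl | hm
    · exact Or.inl hr.zero
    · rw [hr.two_mul]
      exact ih m (by lia)
  | h_odd m ih =>
    rw [hr.two_mul_add_one]
    rcases neg_one_pow_eq_or ℤ m with hsign | hsign <;>
      rcases ih m (by lia) with hm | hm <;> simp [hsign, hm]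

theorem le_one (k : ℕ) : r k ≤ 1 := by
  rcases hr.eq_one_or_eq_neg_one k with h | h <;> simp [h]

theorem neg_one_le (k : ℕ) : -1 ≤ r k := by
  rcases hr.eq_one_or_eq_neg_one k with h | h <;> simp [h]

theorem four_mul (k : ℕ) : r (4 * k) = r k := by
  rw [show 4 * k = 2 * (2 * k) by ring, hr.two_mul, hr.two_mul]

theorem four_mul_add_one (k : ℕ) : r (4 * k + 1) = r k := by
  rw [show 4 * k + 1 = 2 * (2 * k) + 1 by ring, hr.two_mul_add_one, hr.two_mul,
    (even_two_mul k).neg_one_pow, one_mul]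

theorem four_mul_add_two (k : ℕ) : r (4 * k + 2) = defect r k := by
  rw [show 4 * k + 2 = 2 * (2 * k + 1) by ring, hr.two_mul, defect]

theorem four_mul_add_three (k : ℕ) : r (4 * k + 3) = -defect r k := by
  rw [show 4 * k + 3 = 2 * (2 * k + 1) + 1 by ring, hr.two_mul_add_one (2 * k + 1),
    (odd_two_mul_add_one k).neg_one_pow, neg_one_mul, defect]

theorem defect_le_one (k : ℕ) : defect r k ≤ 1 := hr.le_one (2 * k + 1)

theorem neg_one_le_defect (k : ℕ) : -1 ≤ defect r k := hr.neg_one_le (2 * k + 1)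

theorem defect_four_mul (k : ℕ) : defect r (4 * k) = r k := by
  rw [defect, show 2 * (4 * k) + 1 = 4 * (2 * k) + 1 by ring, hr.four_mul_add_one, hr.two_mul]

theorem defect_four_mul_add_two (k : ℕ) : defect r (4 * k + 2) = defect r k := by
  rw [defect, show 2 * (4 * k + 2) + 1 = 4 * (2 * k + 1) + 1 by ring, hr.four_mul_add_one, defect]

theorem defect_four_mul_add_three (k : ℕ) : defect r (4 * k + 3) = defect r k := by
  rw [defect, show 2 * (4 * k + 3) + 1 = 4 * (2 * k + 1) + 3 by ring, hr.four_mul_add_three, defect,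
    show 2 * (2 * k + 1) + 1 = 4 * k + 3 by ring, hr.four_mul_add_three, neg_neg]

theorem prefixSum_four_mul (k : ℕ) : prefixSum r (4 * k) = 2 * prefixSum r k := by
  induction k with
  | zero => rfl
  | succ k ih =>
    rw [show 4 * (k + 1) = 4 * k + 3 + 1 by ring, prefixSum_succ, prefixSum_succ, prefixSum_succ,
      prefixSum_succ, prefixSum_succ, ih, hr.four_mul, hr.four_mul_add_one, hr.four_mul_add_two,
      hr.four_mul_add_three]
    ring

theorem prefixSum_four_mul_add_one (k : ℕ) :
    prefixSum r (4 * k + 1) = prefixSum r k + prefixSum r (k + 1) := by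
  rw [prefixSum_succ, prefixSum_succ, hr.prefixSum_four_mul, hr.four_mul]
  ring

theorem prefixSum_four_mul_add_two (k : ℕ) :
    prefixSum r (4 * k + 2) = 2 * prefixSum r (k + 1) := by
  rw [prefixSum_succ, hr.prefixSum_four_mul_add_one, prefixSum_succ, hr.four_mul_add_one]
  ring

theorem prefixSum_four_mul_add_three (k : ℕ) :
    prefixSum r (4 * k + 3) = 2 * prefixSum r (k + 1) + defect r k := by
  rw [prefixSum_succ, hr.prefixSum_four_mul_add_two, hr.four_mul_add_two]

theorem eq_one_of_mem_Ico {k : ℕ} (hk : k ∈ Finset.Ico 7 11) : r k = 1 := by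
  have h₁ : r 1 = 1 := (hr.four_mul_add_one 0).trans hr.zero
  have h₂ : r 2 = 1 := (hr.two_mul 1).trans h₁
  have h₃ : r 3 = -1 := by
    simpa [h₁] using hr.two_mul_add_one 1
  fin_cases hk
  · simpa [h₃, pow_succ] using hr.two_mul_add_one 3
  · exact (hr.four_mul 2).trans h₂
  · exact (hr.four_mul_add_one 2).trans h₂
  · exact (hr.two_mul 5).trans ((hr.four_mul_add_one 1).trans h₁)

theorem defect_seven : defect r 7 = -1 := by
  rw [defect, hr.two_mul_add_one 7, hr.eq_one_of_mem_Ico (by decide)]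
  norm_num

theorem defect_six : defect r 6 = -1 := by
  have h₆ : defect r 6 = defect r 1 := hr.defect_four_mul_add_two 1
  have h₇ : defect r 7 = defect r 1 := hr.defect_four_mul_add_three 1
  rw [h₆, ← h₇, hr.defect_seven]

theorem defect_eight : defect r 8 = 1 := by
  rw [defect, hr.two_mul_add_one 8, hr.eq_one_of_mem_Ico (by decide)]
  norm_num

variable {M : ℕ → ℤ} (hM : IsMaxWindowSum r M)
include hM

theorem maxSum_four_mul_le (n : ℕ) : M (4 * n) ≤ 2 * M n + 2 := by
  obtain ⟨a, b, hab, hsum⟩ := hM.exists_isMaxWindow (4 * n)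
  obtain ⟨i, ha⟩ := exists_eq_four_mul_add a
  have hleft : prefixSum r (i + n) - prefixSum r i ≤ M n :=
    hM.prefixSum_sub_le i n
  have hright : prefixSum r (i + n + 1) - prefixSum r (i + 1) ≤ M n :=
    hM.prefixSum_succ_sub_succ_le i n
  rcases ha with rfl | rfl | rfl | rfl
  · obtain rfl : b = 4 * (i + n) := by lia
    rw [hr.prefixSum_four_mul, hr.prefixSum_four_mul] at hsum
    linarith
  · obtain rfl : b = 4 * (i + n) + 1 := by lia
    rw [hr.prefixSum_four_mul_add_one, hr.prefixSum_four_mul_add_one] at hsum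
    linarith
  · obtain rfl : b = 4 * (i + n) + 2 := by lia
    rw [hr.prefixSum_four_mul_add_two, hr.prefixSum_four_mul_add_two] at hsum
    linarith
  · obtain rfl : b = 4 * (i + n) + 3 := by lia
    rw [hr.prefixSum_four_mul_add_three, hr.prefixSum_four_mul_add_three] at hsum
    linarith [hr.defect_le_one (i + n), hr.neg_one_le_defect i]

theorem maxSum_four_mul_add_one_le (n : ℕ) : M (4 * n + 1) ≤ 2 * M n + 1 := by
  obtain ⟨a, b, hab, hsum⟩ := hM.exists_isMaxWindow (4 * n + 1)
  obtain ⟨i, ha⟩ := exists_eq_four_mul_add a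
  have hsucc := hM.succ_le_add hr.le_one n
  have hleft : prefixSum r (i + n) - prefixSum r i ≤ M n :=
    hM.prefixSum_sub_le i n
  have hright : prefixSum r (i + n + 1) - prefixSum r (i + 1) ≤ M n :=
    hM.prefixSum_succ_sub_succ_le i n
  have hleft_succ : prefixSum r (i + n + 1) - prefixSum r i ≤ M (n + 1) :=
    hM.prefixSum_sub_le i (n + 1)
  rcases ha with rfl | rfl | rfl | rfl
  · obtain rfl : b = 4 * (i + n) + 1 := by lia
    rw [hr.prefixSum_four_mul_add_one, hr.prefixSum_four_mul] at hsum
    linarith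
  · obtain rfl : b = 4 * (i + n) + 2 := by lia
    rw [hr.prefixSum_four_mul_add_two, hr.prefixSum_four_mul_add_one] at hsum
    linarith
  · obtain rfl : b = 4 * (i + n) + 3 := by lia
    rw [hr.prefixSum_four_mul_add_three, hr.prefixSum_four_mul_add_two] at hsum
    linarith [hr.defect_le_one (i + n)]
  · obtain rfl : b = 4 * (i + n + 1) := by lia
    rw [hr.prefixSum_four_mul, hr.prefixSum_four_mul_add_three] at hsum
    linarith [hr.neg_one_le_defect i]

theorem maxSum_four_mul_add_two_le (n : ℕ) : M (4 * n + 2) ≤ M n + M (n + 1) + 1 := by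
  obtain ⟨a, b, hab, hsum⟩ := hM.exists_isMaxWindow (4 * n + 2)
  obtain ⟨i, ha⟩ := exists_eq_four_mul_add a
  have hsucc := hM.succ_le_add hr.le_one n
  have hpred := hM.add_le_succ hr.neg_one_le n
  have hright : prefixSum r (i + n + 1) - prefixSum r (i + 1) ≤ M n :=
    hM.prefixSum_succ_sub_succ_le i n
  have hleft_succ : prefixSum r (i + n + 1) - prefixSum r i ≤ M (n + 1) :=
    hM.prefixSum_sub_le i (n + 1)
  have hright_succ : prefixSum r (i + n + 1 + 1) - prefixSum r (i + 1) ≤ M (n + 1) :=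
    hM.prefixSum_succ_sub_succ_le i (n + 1)
  rcases ha with rfl | rfl | rfl | rfl
  · obtain rfl : b = 4 * (i + n) + 2 := by lia
    rw [hr.prefixSum_four_mul_add_two, hr.prefixSum_four_mul] at hsum
    linarith
  · obtain rfl : b = 4 * (i + n) + 3 := by lia
    rw [hr.prefixSum_four_mul_add_three, hr.prefixSum_four_mul_add_one] at hsum
    linarith [hr.defect_le_one (i + n)]
  · obtain rfl : b = 4 * (i + n + 1) := by lia
    rw [hr.prefixSum_four_mul, hr.prefixSum_four_mul_add_two] at hsum
    linarith
  · obtain rfl : b = 4 * (i + n + 1) + 1 := by lia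
    rw [hr.prefixSum_four_mul_add_one, hr.prefixSum_four_mul_add_three] at hsum
    linarith [hr.neg_one_le_defect i]

theorem maxSum_four_mul_add_three_le (n : ℕ) : M (4 * n + 3) ≤ 2 * M (n + 1) + 1 := by
  obtain ⟨a, b, hab, hsum⟩ := hM.exists_isMaxWindow (4 * n + 3)
  obtain ⟨i, ha⟩ := exists_eq_four_mul_add a
  have hpred := hM.add_le_succ hr.neg_one_le n
  have hright : prefixSum r (i + n + 1) - prefixSum r (i + 1) ≤ M n :=
    hM.prefixSum_succ_sub_succ_le i n
  have hleft_succ : prefixSum r (i + n + 1) - prefixSum r i ≤ M (n + 1) :=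
    hM.prefixSum_sub_le i (n + 1)
  have hright_succ : prefixSum r (i + n + 1 + 1) - prefixSum r (i + 1) ≤ M (n + 1) :=
    hM.prefixSum_succ_sub_succ_le i (n + 1)
  rcases ha with rfl | rfl | rfl | rfl
  · obtain rfl : b = 4 * (i + n) + 3 := by lia
    rw [hr.prefixSum_four_mul_add_three, hr.prefixSum_four_mul] at hsum
    linarith [hr.defect_le_one (i + n)]
  · obtain rfl : b = 4 * (i + n + 1) := by lia
    rw [hr.prefixSum_four_mul, hr.prefixSum_four_mul_add_one] at hsum
    linarith
  · obtain rfl : b = 4 * (i + n + 1) + 1 := by lia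
    rw [hr.prefixSum_four_mul_add_one, hr.prefixSum_four_mul_add_two] at hsum
    linarith
  · obtain rfl : b = 4 * (i + n + 1) + 2 := by lia
    rw [hr.prefixSum_four_mul_add_two, hr.prefixSum_four_mul_add_three] at hsum
    linarith [hr.neg_one_le_defect i]

end IsRudinShapiro

/-- The invariant of the induction: a maximal window `[i + 1, j + 1)` of length `n` at both of whose
ends the error term of the prefix sums is favourable. -/
def HasTightWindow (r M : ℕ → ℤ) (n : ℕ) : Prop :=
  ∃ i j, IsMaxWindow r M n (i + 1) (j + 1) ∧ defect r i = -1 ∧ defect r j = 1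

/-- A maximal window `[i + 1, b)` of length `n` with favourable error term on the left; as
`r b = 1`, the window `[i + 1, b + 1)` is maximal too. -/
def HasGrowingWindow (r M : ℕ → ℤ) (n : ℕ) : Prop :=
  ∃ i b, IsMaxWindow r M n (i + 1) b ∧ defect r i = -1 ∧ r b = 1

/-- A maximal window `[a, j + 1)` of length `n + 1` with favourable error term on the right; as
`r a = -1`, the window `[a + 1, j + 1)` of length `n` is maximal too. -/
def HasShrinkingWindow (r M : ℕ → ℤ) (n : ℕ) : Prop :=
  ∃ a j, IsMaxWindow r M (n + 1) a (j + 1) ∧ r a = -1 ∧ defect r j = 1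

section MaximalWindows

variable {r M : ℕ → ℤ} (hr : IsRudinShapiro r) (hM : IsMaxWindowSum r M) {n : ℕ}
include hr hM

namespace IsMaxWindow

variable {i j a b : ℕ}

theorem four_mul (hw : IsMaxWindow r M n (i + 1) (j + 1)) (hi : defect r i = -1)
    (hj : defect r j = 1) : IsMaxWindow r M (4 * n) (4 * i + 3) (4 * j + 3) := by
  obtain ⟨hlen, hsum⟩ := hw
  refine hM.isMaxWindow_of_le (by lia) ?_
  rw [hr.prefixSum_four_mul_add_three, hr.prefixSum_four_mul_add_three]
  linarith [hr.maxSum_four_mul_le hM n]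

theorem four_mul_add_one_of_left (hw : IsMaxWindow r M n (i + 1) b) (hi : defect r i = -1) :
    IsMaxWindow r M (4 * n + 1) (4 * i + 3) (4 * b) := by
  obtain ⟨hlen, hsum⟩ := hw
  refine hM.isMaxWindow_of_le (by lia) ?_
  rw [hr.prefixSum_four_mul, hr.prefixSum_four_mul_add_three]
  linarith [hr.maxSum_four_mul_add_one_le hM n]

theorem four_mul_add_one_of_right (hw : IsMaxWindow r M n (i + 1) (j + 1)) (hj : defect r j = 1) :
    IsMaxWindow r M (4 * n + 1) (4 * i + 2) (4 * j + 3) := by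
  obtain ⟨hlen, hsum⟩ := hw
  refine hM.isMaxWindow_of_le (by lia) ?_
  rw [hr.prefixSum_four_mul_add_three, hr.prefixSum_four_mul_add_two]
  linarith [hr.maxSum_four_mul_add_one_le hM n]

theorem four_mul_add_two_of_left (hw : IsMaxWindow r M n (i + 1) b) (hi : defect r i = -1)
    (hb : r b = 1) : IsMaxWindow r M (4 * n + 2) (4 * i + 3) (4 * b + 1) := by
  obtain ⟨hlen, hsum⟩ := hw
  refine hM.isMaxWindow_of_le (by lia) ?_
  rw [hr.prefixSum_four_mul_add_one, hr.prefixSum_four_mul_add_three, prefixSum_succ]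
  linarith [hr.maxSum_four_mul_add_two_le hM n, hM.succ_le_add hr.le_one n]

theorem four_mul_add_two_of_right (hw : IsMaxWindow r M (n + 1) a (j + 1)) (ha : r a = -1)
    (hj : defect r j = 1) : IsMaxWindow r M (4 * n + 2) (4 * a + 1) (4 * j + 3) := by
  obtain ⟨hlen, hsum⟩ := hw
  refine hM.isMaxWindow_of_le (by lia) ?_
  rw [hr.prefixSum_four_mul_add_three, hr.prefixSum_four_mul_add_one, prefixSum_succ r a]
  linarith [hr.maxSum_four_mul_add_two_le hM n, hM.add_le_succ hr.neg_one_le n]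

theorem four_mul_add_three_of_left (hw : IsMaxWindow r M (n + 1) (i + 1) (j + 1))
    (hi : defect r i = -1) : IsMaxWindow r M (4 * n + 3) (4 * i + 3) (4 * j + 2) := by
  obtain ⟨hlen, hsum⟩ := hw
  refine hM.isMaxWindow_of_le (by lia) ?_
  rw [hr.prefixSum_four_mul_add_two, hr.prefixSum_four_mul_add_three]
  linarith [hr.maxSum_four_mul_add_three_le hM n]

theorem four_mul_add_three_of_right (hw : IsMaxWindow r M (n + 1) a (j + 1))
    (hj : defect r j = 1) : IsMaxWindow r M (4 * n + 3) (4 * a) (4 * j + 3) := by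
  obtain ⟨hlen, hsum⟩ := hw
  refine hM.isMaxWindow_of_le (by lia) ?_
  rw [hr.prefixSum_four_mul_add_three, hr.prefixSum_four_mul]
  linarith [hr.maxSum_four_mul_add_three_le hM n]

end IsMaxWindow

namespace HasTightWindow

theorem four_mul (h : HasTightWindow r M n) : HasTightWindow r M (4 * n) := by
  obtain ⟨i, j, hw, hi, hj⟩ := h
  exact ⟨4 * i + 2, 4 * j + 2, hw.four_mul hr hM hi hj,
    (hr.defect_four_mul_add_two i).trans hi, (hr.defect_four_mul_add_two j).trans hj⟩

theorem four_mul_add_one (h : HasTightWindow r M n) : HasTightWindow r M (4 * n + 1) := by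
  obtain ⟨i, j, hw, hi, hj⟩ := h
  exact ⟨4 * i + 2, 4 * j + 3, hw.four_mul_add_one_of_left hr hM hi,
    (hr.defect_four_mul_add_two i).trans hi, (hr.defect_four_mul_add_three j).trans hj⟩

theorem four_mul_add_three (h : HasTightWindow r M (n + 1)) :
    HasTightWindow r M (4 * n + 3) := by
  obtain ⟨i, j, hw, hi, hj⟩ := h
  exact ⟨4 * i + 3, 4 * j + 2, hw.four_mul_add_three_of_right hr hM hj,
    (hr.defect_four_mul_add_three i).trans hi, (hr.defect_four_mul_add_two j).trans hj⟩

theorem hasShrinkingWindow_four_mul (h : HasTightWindow r M n) :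
    HasShrinkingWindow r M (4 * n) := by
  obtain ⟨i, j, hw, hi, hj⟩ := h
  exact ⟨4 * i + 2, 4 * j + 2, hw.four_mul_add_one_of_right hr hM hj,
    (hr.four_mul_add_two i).trans hi, (hr.defect_four_mul_add_two j).trans hj⟩

theorem hasGrowingWindow_four_mul_add_three (h : HasTightWindow r M (n + 1)) :
    HasGrowingWindow r M (4 * n + 3) := by
  obtain ⟨i, j, hw, hi, hj⟩ := h
  exact ⟨4 * i + 2, 4 * j + 2, hw.four_mul_add_three_of_left hr hM hi,
    (hr.defect_four_mul_add_two i).trans hi, (hr.four_mul_add_two j).trans hj⟩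

theorem maxSum_four_mul (h : HasTightWindow r M n) : M (4 * n) = 2 * M n + 2 := by
  obtain ⟨i, j, hw, hi, hj⟩ := h
  rw [← (hw.four_mul hr hM hi hj).2, ← hw.2, hr.prefixSum_four_mul_add_three,
    hr.prefixSum_four_mul_add_three, hi, hj]
  ring

theorem maxSum_four_mul_add_one (h : HasTightWindow r M n) : M (4 * n + 1) = 2 * M n + 1 := by
  obtain ⟨i, j, hw, hi, -⟩ := h
  rw [← (hw.four_mul_add_one_of_left hr hM hi).2, ← hw.2, hr.prefixSum_four_mul,
    hr.prefixSum_four_mul_add_three, hi]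
  ring

theorem maxSum_four_mul_add_three (h : HasTightWindow r M (n + 1)) :
    M (4 * n + 3) = 2 * M (n + 1) + 1 := by
  obtain ⟨i, j, hw, hi, -⟩ := h
  rw [← (hw.four_mul_add_three_of_left hr hM hi).2, ← hw.2, hr.prefixSum_four_mul_add_two,
    hr.prefixSum_four_mul_add_three, hi]
  ring

end HasTightWindow

namespace HasGrowingWindow

theorem four_mul_add_one (h : HasGrowingWindow r M n) : HasGrowingWindow r M (4 * n + 1) := by
  obtain ⟨i, b, hw, hi, hb⟩ := h
  exact ⟨4 * i + 2, 4 * b, hw.four_mul_add_one_of_left hr hM hi,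
    (hr.defect_four_mul_add_two i).trans hi, (hr.four_mul b).trans hb⟩

theorem four_mul_add_two (h : HasGrowingWindow r M n) : HasGrowingWindow r M (4 * n + 2) := by
  obtain ⟨i, b, hw, hi, hb⟩ := h
  exact ⟨4 * i + 2, 4 * b + 1, hw.four_mul_add_two_of_left hr hM hi hb,
    (hr.defect_four_mul_add_two i).trans hi, (hr.four_mul_add_one b).trans hb⟩

theorem hasTightWindow_four_mul_add_two (h : HasGrowingWindow r M n) :
    HasTightWindow r M (4 * n + 2) := by
  obtain ⟨i, b, hw, hi, hb⟩ := h
  exact ⟨4 * i + 2, 4 * b, hw.four_mul_add_two_of_left hr hM hi hb,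
    (hr.defect_four_mul_add_two i).trans hi, (hr.defect_four_mul b).trans hb⟩

theorem maxSum_four_mul_add_two (h : HasGrowingWindow r M n) :
    M (4 * n + 2) = M n + M (n + 1) + 1 := by
  obtain ⟨i, b, hw, hi, hb⟩ := h
  rw [← (hw.four_mul_add_two_of_left hr hM hi hb).2,
    hw.maxSum_succ_of_right_eq hM hr.le_one hb, ← hw.2,
    hr.prefixSum_four_mul_add_one, hr.prefixSum_four_mul_add_three, prefixSum_succ, hi, hb]
  ring

end HasGrowingWindow

namespace HasShrinkingWindow

theorem four_mul_add_one (h : HasShrinkingWindow r M n) : HasShrinkingWindow r M (4 * n + 1) := by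
  obtain ⟨a, j, hw, ha, hj⟩ := h
  exact ⟨4 * a + 1, 4 * j + 2, hw.four_mul_add_two_of_right hr hM ha hj,
    (hr.four_mul_add_one a).trans ha, (hr.defect_four_mul_add_two j).trans hj⟩

theorem four_mul_add_two (h : HasShrinkingWindow r M n) : HasShrinkingWindow r M (4 * n + 2) := by
  obtain ⟨a, j, hw, ha, hj⟩ := h
  exact ⟨4 * a, 4 * j + 2, hw.four_mul_add_three_of_right hr hM hj,
    (hr.four_mul a).trans ha, (hr.defect_four_mul_add_two j).trans hj⟩

theorem hasTightWindow_four_mul_add_two (h : HasShrinkingWindow r M n) :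
    HasTightWindow r M (4 * n + 2) := by
  obtain ⟨a, j, hw, ha, hj⟩ := h
  exact ⟨4 * a, 4 * j + 2, hw.four_mul_add_two_of_right hr hM ha hj,
    (hr.defect_four_mul a).trans ha, (hr.defect_four_mul_add_two j).trans hj⟩

theorem maxSum_four_mul_add_two (h : HasShrinkingWindow r M n) :
    M (4 * n + 2) = M n + M (n + 1) + 1 := by
  obtain ⟨a, j, hw, ha, hj⟩ := h
  have hsucc : M (n + 1) = M n + -1 := hw.maxSum_succ_of_left_eq hM hr.neg_one_le ha
  rw [← (hw.four_mul_add_two_of_right hr hM ha hj).2, hr.prefixSum_four_mul_add_three,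
    hr.prefixSum_four_mul_add_one, prefixSum_succ r a, ha, hj]
  linarith [hw.2]

end HasShrinkingWindow

theorem isMaxWindow_of_le_eleven {a : ℕ} (ha : 7 ≤ a) (han : a + n ≤ 11) :
    IsMaxWindow r M n a (a + n) :=
  hM.isMaxWindow_of_forall_eq hr.le_one fun _ hk =>
    hr.eq_one_of_mem_Ico (Finset.Ico_subset_Ico ha han hk)

theorem maxSum_eq_natCast (hn : n ≤ 4) : M n = n := by
  have hrun : ∀ k ∈ Finset.Ico 7 (7 + n), r k = 1 := fun k hk =>
    hr.eq_one_of_mem_Ico (Finset.Ico_subset_Ico_right (Nat.add_le_add_left hn 7) hk)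
  rw [hM.eq_mul_of_forall_eq hr.le_one hrun, mul_one]

theorem hasTightWindow_one : HasTightWindow r M 1 :=
  ⟨7, 8, isMaxWindow_of_le_eleven hr hM (by simp) (by simp), hr.defect_seven, hr.defect_eight⟩

theorem hasTightWindow_two : HasTightWindow r M 2 :=
  ⟨6, 8, isMaxWindow_of_le_eleven hr hM (by simp) (by simp), hr.defect_six, hr.defect_eight⟩

theorem hasGrowingWindow_one : HasGrowingWindow r M 1 :=
  ⟨7, 9, isMaxWindow_of_le_eleven hr hM (by simp) (by simp), hr.defect_seven,
    hr.eq_one_of_mem_Ico (by decide)⟩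

theorem hasGrowingWindow_two : HasGrowingWindow r M 2 :=
  ⟨7, 10, isMaxWindow_of_le_eleven hr hM (by simp) (by simp), hr.defect_seven,
    hr.eq_one_of_mem_Ico (by decide)⟩

theorem hasTightWindow_and_growing_or_shrinking (hn : 1 ≤ n) :
    HasTightWindow r M n ∧ (HasGrowingWindow r M n ∨ HasShrinkingWindow r M n) := by
  induction n using Nat.strong_induction_on with
  | _ n ih =>
    obtain rfl | rfl | rfl | hlarge : n = 1 ∨ n = 2 ∨ n = 3 ∨ 4 ≤ n := by lia
    · exact ⟨hasTightWindow_one hr hM, .inl (hasGrowingWindow_one hr hM)⟩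
    · exact ⟨hasTightWindow_two hr hM, .inl (hasGrowingWindow_two hr hM)⟩
    · have htight : HasTightWindow r M (0 + 1) := hasTightWindow_one hr hM
      exact ⟨htight.four_mul_add_three hr hM,
        .inl (htight.hasGrowingWindow_four_mul_add_three hr hM)⟩
    obtain ⟨k, hk⟩ := exists_eq_four_mul_add n
    obtain ⟨htight, hgs⟩ := ih k (by lia) (by lia)
    obtain ⟨htight_succ, -⟩ := ih (k + 1) (by lia) (by lia)
    rcases hk with rfl | rfl | rfl | rfl
    · exact ⟨htight.four_mul hr hM, .inr (htight.hasShrinkingWindow_four_mul hr hM)⟩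
    · exact ⟨htight.four_mul_add_one hr hM,
        hgs.imp (·.four_mul_add_one hr hM) (·.four_mul_add_one hr hM)⟩
    · exact ⟨hgs.elim (·.hasTightWindow_four_mul_add_two hr hM)
        (·.hasTightWindow_four_mul_add_two hr hM),
        hgs.imp (·.four_mul_add_two hr hM) (·.four_mul_add_two hr hM)⟩
    · exact ⟨htight_succ.four_mul_add_three hr hM,
        .inl (htight_succ.hasGrowingWindow_four_mul_add_three hr hM)⟩

theorem hasTightWindow (hn : 1 ≤ n) : HasTightWindow r M n :=
  (hasTightWindow_and_growing_or_shrinking hr hM hn).1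

theorem maxSum_four_mul_add_two (hn : 1 ≤ n) : M (4 * n + 2) = M n + M (n + 1) + 1 :=
  (hasTightWindow_and_growing_or_shrinking hr hM hn).2.elim
    (·.maxSum_four_mul_add_two hr hM) (·.maxSum_four_mul_add_two hr hM)

end MaximalWindows

/-- For `ΔM(n) = M(n+1) − M(n)`: `ΔM(i) = 1` for
`0 ≤ i ≤ 3`, and for `n ≥ 1`: `ΔM(4n) = −1`, `ΔM(4n+3) = 1`,
`ΔM(4n+1) = ΔM(4n+2) = ΔM(n)`. -/
theorem delta_max_sum_recurrences
    (r : ℕ → ℤ) (hr0 : r 0 = 1)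
    (hre : ∀ n, r (2 * n) = r n)
    (hro : ∀ n, r (2 * n + 1) = (-1) ^ n * r n)
    (M : ℕ → ℤ)
    (hM : ∀ n, IsGreatest (Set.range fun i => pSum r i n) (M n))
    (ΔM : ℕ → ℤ) (hΔ : ∀ n, ΔM n = M (n + 1) - M n) :
    (∀ i, i ≤ 3 → ΔM i = 1) ∧
    (∀ n, 1 ≤ n →
      ΔM (4 * n) = -1 ∧
      ΔM (4 * n + 3) = 1 ∧
      ΔM (4 * n + 1) = ΔM n ∧
      ΔM (4 * n + 2) = ΔM n) := by
  have hr : IsRudinShapiro r := ⟨hr0, hre, hro⟩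
  have hmax : IsMaxWindowSum r M := hM
  refine ⟨fun i hi => ?_, fun n hn => ?_⟩
  · rw [hΔ, maxSum_eq_natCast hr hmax (by lia : i + 1 ≤ 4),
      maxSum_eq_natCast hr hmax (by lia : i ≤ 4), Nat.cast_succ, add_sub_cancel_left]
  · have htight := hasTightWindow hr hmax hn
    have htight_succ := hasTightWindow hr hmax (Nat.le_add_left 1 n)
    have h₀ : M (4 * n) = 2 * M n + 2 := htight.maxSum_four_mul hr hmax
    have h₁ : M (4 * n + 1) = 2 * M n + 1 := htight.maxSum_four_mul_add_one hr hmax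
    have h₂ : M (4 * n + 2) = M n + M (n + 1) + 1 := maxSum_four_mul_add_two hr hmax hn
    have h₃ : M (4 * n + 3) = 2 * M (n + 1) + 1 := htight_succ.maxSum_four_mul_add_three hr hmax
    have h₄ : M (4 * n + 4) = 2 * M (n + 1) + 2 := htight_succ.maxSum_four_mul hr hmax
    simp only [hΔ, h₀, h₁, h₂, h₃, h₄, add_assoc, Nat.reduceAdd]
    refine ⟨?_, ?_, ?_, ?_⟩ <;> ring
end
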